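/- arXiv:2306.01909 — 5 statements merged into one kernel-verified Lean document; each statement's English description precedes it below -/
import Mathlib

section
/- Let A₁ and A₂ be unital C*-algebras over ℂ, let ω₁ be a state on A₁ and ω₂ a state on A₂. Then for all self-adjoint elements A, A' ∈ A₁ and B, B' ∈ A₂ with ‖A‖ ≤ 1, ‖A'‖ ≤ 1, ‖B‖ ≤ 1, ‖B'‖ ≤ 1, one has |ω₁(A) * (ω₂(B) - ω₂(B'))| + |ω₁(A') * (ω₂(B) + ω₂(B'))| ≤ 2. -/
/-- A state on a unital complex C*-algebra (or more generally a unital complex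
star algebra): a `ℂ`-linear functional sending `1` to `1` and taking
nonnegative real values on elements of the form `star a * a`. -/
def IsState {A : Type*} [Ring A] [StarRing A] [Algebra ℂ A]
    (φ : A →ₗ[ℂ] ℂ) : Prop :=
  φ 1 = 1 ∧ ∀ a : A, 0 ≤ (φ (star a * a)).re ∧ (φ (star a * a)).im = 0

/-- A self-adjoint contraction `a` in a unital C⋆-algebra satisfies `1 - a = star b * b` for
some `b`. -/
lemma IsSelfAdjoint.exists_one_sub_eq_star_mul_self {A : Type*} [CStarAlgebra A] {a : A}
    (ha : IsSelfAdjoint a) (hn : ‖a‖ ≤ 1) : ∃ b : A, 1 - a = star b * b := by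
  let : PartialOrder A := CStarAlgebra.spectralOrder A
  have : StarOrderedRing A := CStarAlgebra.spectralOrderedRing A
  have hle : a ≤ 1 := by
    have hmono : algebraMap ℝ A ‖a‖ ≤ algebraMap ℝ A 1 := algebraMap_mono A hn
    simpa using ha.le_algebraMap_norm_self.trans hmono
  exact CStarAlgebra.nonneg_iff_eq_star_mul_self.mp (sub_nonneg.mpr hle)

/-- A state takes real values in `[-1, 1]` on self-adjoint contractions. -/
lemma IsState.exists_ofReal_eq {A : Type*} [CStarAlgebra A] {φ : A →ₗ[ℂ] ℂ} (hφ : IsState φ)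
    {a : A} (ha : IsSelfAdjoint a) (hn : ‖a‖ ≤ 1) : ∃ r : ℝ, φ a = r ∧ |r| ≤ 1 := by
  obtain ⟨b, hb⟩ := ha.exists_one_sub_eq_star_mul_self hn
  obtain ⟨c, hc⟩ := ha.neg.exists_one_sub_eq_star_mul_self (by rwa [norm_neg])
  have hb' := hφ.2 b
  have hc' := hφ.2 c
  rw [← hb, map_sub, hφ.1] at hb'
  rw [← hc, map_sub, map_neg, hφ.1] at hc'
  simp only [Complex.sub_re, Complex.sub_im, Complex.neg_re, Complex.one_re, Complex.one_im]
    at hb' hc'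
  exact ⟨(φ a).re, Complex.ext (by simp) (by simpa using hb'.2),
    abs_le.mpr ⟨by linarith [hc'.1], by linarith [hb'.1]⟩⟩

/-- The Bell (CHSH) inequality for real numbers in `[-1, 1]`. -/
lemma abs_mul_sub_add_abs_mul_add_le_two {x x' y y' : ℝ} (hx : |x| ≤ 1) (hx' : |x'| ≤ 1)
    (hy : |y| ≤ 1) (hy' : |y'| ≤ 1) : |x * (y - y')| + |x' * (y + y')| ≤ 2 := by
  have hsum : |y - y'| + |y + y'| ≤ 2 := by
    rw [abs_le] at hy hy'
    cases abs_cases (y - y') <;> cases abs_cases (y + y') <;> linarith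
  rw [abs_mul, abs_mul]
  linarith [mul_le_of_le_one_left (abs_nonneg (y - y')) hx,
    mul_le_of_le_one_left (abs_nonneg (y + y')) hx']

/-- Baez's proposition: the correlation values of a product state
`ω(A ⊗ B) = ω₁(A) ω₂(B)` satisfy the Bell inequalities. -/
theorem product_state_satisfies_bell_inequalities
    {A₁ : Type*} [CStarAlgebra A₁] {A₂ : Type*} [CStarAlgebra A₂]
    (ω₁ : A₁ →ₗ[ℂ] ℂ) (hω₁ : IsState ω₁)
    (ω₂ : A₂ →ₗ[ℂ] ℂ) (hω₂ : IsState ω₂)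
    (A A' : A₁) (B B' : A₂)
    (hA : IsSelfAdjoint A) (hA' : IsSelfAdjoint A')
    (hB : IsSelfAdjoint B) (hB' : IsSelfAdjoint B')
    (hAn : ‖A‖ ≤ 1) (hA'n : ‖A'‖ ≤ 1) (hBn : ‖B‖ ≤ 1) (hB'n : ‖B'‖ ≤ 1) :
    ‖ω₁ A * (ω₂ B - ω₂ B')‖ + ‖ω₁ A' * (ω₂ B + ω₂ B')‖ ≤ 2 := by
  obtain ⟨x, hx, hx1⟩ := hω₁.exists_ofReal_eq hA hAn
  obtain ⟨x', hx', hx'1⟩ := hω₁.exists_ofReal_eq hA' hA'n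
  obtain ⟨y, hy, hy1⟩ := hω₂.exists_ofReal_eq hB hBn
  obtain ⟨y', hy', hy'1⟩ := hω₂.exists_ofReal_eq hB' hB'n
  rw [hx, hx', hy, hy']
  norm_cast
  exact abs_mul_sub_add_abs_mul_add_le_two hx1 hx'1 hy1 hy'1
end

section
/- Let X be a nonempty compact Hausdorff topological space and A a unital C*-algebra over ℂ, and let C(X, A) denote the unital C*-algebra of continuous functions from X to A with pointwise operations and supremum norm. Let ω be any state on C(X, A). Then for all continuous real-valued functions g, g' on X with sup-norm at most 1 and all self-adjoint elements B, B' ∈ A with ‖B‖ ≤ 1 and ‖B'‖ ≤ 1, one has |ω(fun x ↦ g(x) • (B - B'))| + |ω(fun x ↦ g'(x) • (B + B'))| ≤ 2. -/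
/-- A state is real on self-adjoint elements and bounded above there by the norm. -/
theorem IsState.im_eq_zero_and_re_le_norm {A : Type*} [CStarAlgebra A] {φ : A →ₗ[ℂ] ℂ}
    (hφ : IsState φ) {a : A} (ha : IsSelfAdjoint a) :
    (φ a).im = 0 ∧ (φ a).re ≤ ‖a‖ := by
  let _ : PartialOrder A := CStarAlgebra.spectralOrder A
  have _ : StarOrderedRing A := CStarAlgebra.spectralOrderedRing A
  obtain ⟨b, hb⟩ := CStarAlgebra.nonneg_iff_eq_star_mul_self.mp
    (sub_nonneg.mpr (IsSelfAdjoint.le_algebraMap_norm_self ha))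
  have hpos := hφ.2 b
  have hnorm : φ (algebraMap ℝ A ‖a‖) = (‖a‖ : ℂ) := by
    rw [IsScalarTower.algebraMap_apply ℝ ℂ A, Algebra.algebraMap_eq_smul_one, map_smul, hφ.1]
    simp
  rw [← hb, map_sub, hnorm] at hpos
  simp only [Complex.sub_re, Complex.sub_im, Complex.ofReal_re, Complex.ofReal_im] at hpos
  constructor <;> linarith [hpos.1, hpos.2]

/-- The pointwise form of the Bell inequality for commuting observables. -/
theorem norm_smul_sub_add_smul_add_le_two {A : Type*} [NormedAddCommGroup A] [NormedSpace ℝ A]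
    {r s : ℝ} (hr : |r| ≤ 1) (hs : |s| ≤ 1) {a b : A} (ha : ‖a‖ ≤ 1) (hb : ‖b‖ ≤ 1) :
    ‖r • (a - b) + s • (a + b)‖ ≤ 2 := by
  have hsplit : r • (a - b) + s • (a + b) = (s + r) • a + (s - r) • b := by module
  have habs : |s + r| + |s - r| ≤ 2 := by
    rw [abs_le] at hr hs
    rcases abs_cases (s + r) with h | h <;> rcases abs_cases (s - r) with h' | h' <;> linarith
  calc ‖r • (a - b) + s • (a + b)‖ ≤ |s + r| * ‖a‖ + |s - r| * ‖b‖ := by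
        rw [hsplit]
        exact (norm_add_le _ _).trans_eq (by simp only [norm_smul, Real.norm_eq_abs])
    _ ≤ |s + r| * 1 + |s - r| * 1 := by gcongr
    _ ≤ 2 := by linarith

/-- Baez's theorem for a composite system with one commutative factor,
formulated concretely on `C(X, A) ≅ C(X) ⊗ A`: every state satisfies the Bell
inequalities, where the elementary tensor `g ⊗ B` corresponds to the function
`x ↦ g x • B`. -/
theorem state_of_continuousMap_satisfies_bell_inequalities
    (X : Type*) [TopologicalSpace X] [CompactSpace X] [T2Space X] [Nonempty X]
    (A : Type*) [CStarAlgebra A]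
    (ω : C(X, A) →ₗ[ℂ] ℂ) (hω : IsState ω)
    (g g' : C(X, ℝ)) (hg : ‖g‖ ≤ 1) (hg' : ‖g'‖ ≤ 1)
    (B B' : A) (hB : IsSelfAdjoint B) (hB' : IsSelfAdjoint B')
    (hBn : ‖B‖ ≤ 1) (hB'n : ‖B'‖ ≤ 1) :
    ‖ω ⟨fun x => g x • (B - B'), g.continuous.smul continuous_const⟩‖ +
      ‖ω ⟨fun x => g' x • (B + B'), g'.continuous.smul continuous_const⟩‖ ≤ 2 := by
  set F : C(X, A) := ⟨fun x => g x • (B - B'), g.continuous.smul continuous_const⟩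
  set G : C(X, A) := ⟨fun x => g' x • (B + B'), g'.continuous.smul continuous_const⟩
  have hFsa : IsSelfAdjoint F := by
    ext x
    exact (IsSelfAdjoint.all (g x)).smul (hB.sub hB')
  have hGsa : IsSelfAdjoint G := by
    ext x
    exact (IsSelfAdjoint.all (g' x)).smul (hB.add hB')
  have hadd : ‖F + G‖ ≤ 2 := (ContinuousMap.norm_le _ zero_le_two).mpr fun x =>
    norm_smul_sub_add_smul_add_le_two ((g.norm_coe_le_norm x).trans hg)
      ((g'.norm_coe_le_norm x).trans hg') hBn hB'n
  have hsub : ‖F - G‖ ≤ 2 := (ContinuousMap.norm_le _ zero_le_two).mpr fun x => by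
    have h := norm_smul_sub_add_smul_add_le_two (r := g x) (s := -g' x)
      ((g.norm_coe_le_norm x).trans hg)
      ((abs_neg _).trans_le ((g'.norm_coe_le_norm x).trans hg')) hBn hB'n
    rwa [neg_smul, ← sub_eq_add_neg] at h
  have norm_eq {H : C(X, A)} (hH : IsSelfAdjoint H) : ‖ω H‖ = |(ω H).re| :=
    (Complex.abs_re_eq_norm.mpr (hω.im_eq_zero_and_re_le_norm hH).1).symm
  have h₁ := (hω.im_eq_zero_and_re_le_norm (hFsa.add hGsa)).2
  have h₂ := (hω.im_eq_zero_and_re_le_norm (hFsa.sub hGsa)).2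
  have h₃ := (hω.im_eq_zero_and_re_le_norm (hFsa.add hGsa).neg).2
  have h₄ := (hω.im_eq_zero_and_re_le_norm (hFsa.sub hGsa).neg).2
  simp only [norm_neg, map_neg, map_add, map_sub, Complex.neg_re, Complex.add_re,
    Complex.sub_re] at h₁ h₂ h₃ h₄
  rw [norm_eq hFsa, norm_eq hGsa]
  rcases abs_cases (ω F).re with h | h <;> rcases abs_cases (ω G).re with h' | h' <;> linarith
end

section
/- There exist self-adjoint 2×2 complex matrices A, A', B, B', each of operator (spectral) norm at most 1, and a unit vector ψ ∈ ℂ² ⊗ ℂ² (i.e. a function ψ : Fin 2 × Fin 2 → ℂ with ∑ |ψ(i,j)|² = 1), such that |⟨ψ, (A ⊗ₖ (B - B')) ψ⟩| + |⟨ψ, (A' ⊗ₖ (B + B')) ψ⟩| = 2 * Real.sqrt 2, where ⊗ₖ denotes the Kronecker product of matrices (so that A ⊗ₖ C is a 4×4 matrix indexed by Fin 2 × Fin 2) and ⟨·,·⟩ is the standard inner product on ℂ^(Fin 2 × Fin 2). -/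
open scoped Matrix.Norms.L2Operator Kronecker
open Matrix

namespace BohmBell

/-- The spin observable `a σ_z + b σ_x`. -/
def spin (a b : ℝ) : Matrix (Fin 2) (Fin 2) ℂ := !![(a : ℂ), b; b, -a]

/-- The singlet vector `(e₀ ⊗ e₁ - e₁ ⊗ e₀) / √2`. -/
noncomputable def singlet (p : Fin 2 × Fin 2) : ℂ :=
  !![0, ((√2 / 2 : ℝ) : ℂ); -((√2 / 2 : ℝ) : ℂ), 0] p.1 p.2

theorem isHermitian_spin (a b : ℝ) : (spin a b).IsHermitian := by
  ext i j
  fin_cases i <;> fin_cases j <;> simp [spin]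

theorem spin_add_spin (a b c d : ℝ) : spin a b + spin c d = spin (a + c) (b + d) := by
  ext i j
  fin_cases i <;> fin_cases j <;> simp [spin, add_comm]

theorem spin_sub_spin (a b c d : ℝ) : spin a b - spin c d = spin (a - c) (b - d) := by
  ext i j
  fin_cases i <;> fin_cases j <;> simp [spin, sub_eq_add_neg, add_comm]

theorem spin_mul_self {a b : ℝ} (h : a ^ 2 + b ^ 2 = 1) : spin a b * spin a b = 1 := by
  have hc : (a : ℂ) ^ 2 + (b : ℂ) ^ 2 = 1 := mod_cast h
  ext i j
  fin_cases i <;> fin_cases j <;> simp [spin, Matrix.mul_apply] <;> grind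

theorem norm_spin {a b : ℝ} (h : a ^ 2 + b ^ 2 = 1) : ‖spin a b‖ = 1 := by
  have hs := CStarRing.norm_star_mul_self (x := spin a b)
  rw [star_eq_conjTranspose, (isHermitian_spin a b).eq, spin_mul_self h, CStarRing.norm_one] at hs
  nlinarith [norm_nonneg (spin a b)]

theorem sum_norm_singlet_sq : ∑ p, ‖singlet p‖ ^ 2 = 1 := by
  simp [Fintype.sum_prod_type, singlet, div_pow]
  norm_num

/-- The singlet correlation of two spin observables is minus the cosine of their angle. -/
theorem singlet_correlation (a b c d : ℝ) :
    star singlet ⬝ᵥ ((spin a b ⊗ₖ spin c d).mulVec singlet) = ((-(a * c + b * d) : ℝ) : ℂ) := by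
  have hs : ((√2 : ℝ) : ℂ) ^ 2 = 2 := by
    exact_mod_cast Real.sq_sqrt (zero_le_two (α := ℝ))
  simp [dotProduct, mulVec, Fintype.sum_prod_type, singlet, spin, Complex.conj_ofNat]
  linear_combination (-(a * c + b * d : ℂ) / 2) * hs

end BohmBell

open BohmBell in
/-- The Bohm–Bell situation: there exist self-adjoint `2 × 2` complex matrices of
operator (spectral) norm at most `1` and a unit vector `ψ ∈ ℂ² ⊗ ℂ²` whose
vector state attains the maximal violation `2√2` of the Bell inequality. -/
theorem bell_inequality_maximal_violation :
    ∃ (A A' B B' : Matrix (Fin 2) (Fin 2) ℂ) (ψ : Fin 2 × Fin 2 → ℂ),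
      A.IsHermitian ∧ A'.IsHermitian ∧ B.IsHermitian ∧ B'.IsHermitian ∧
      ‖A‖ ≤ 1 ∧ ‖A'‖ ≤ 1 ∧ ‖B‖ ≤ 1 ∧ ‖B'‖ ≤ 1 ∧
      (∑ p : Fin 2 × Fin 2, ‖ψ p‖ ^ 2) = 1 ∧
      ‖star ψ ⬝ᵥ ((A ⊗ₖ (B - B')).mulVec ψ)‖ +
          ‖star ψ ⬝ᵥ ((A' ⊗ₖ (B + B')).mulVec ψ)‖ =
        2 * Real.sqrt 2 := by
  have hs : (√2 / 2) ^ 2 = 1 / 2 := by norm_num [div_pow]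
  refine ⟨spin 1 0, spin 0 1, spin (√2 / 2) (√2 / 2), spin (-(√2 / 2)) (√2 / 2), singlet,
    isHermitian_spin _ _, isHermitian_spin _ _, isHermitian_spin _ _, isHermitian_spin _ _,
    (norm_spin (by norm_num)).le, (norm_spin (by norm_num)).le,
    (norm_spin (by linarith)).le, (norm_spin (by rw [neg_sq]; linarith)).le,
    sum_norm_singlet_sq, ?_⟩
  rw [spin_sub_spin, spin_add_spin, singlet_correlation, singlet_correlation,
    Complex.norm_real, Complex.norm_real]
  simp only [one_mul, zero_mul, add_zero, zero_add, sub_neg_eq_add, add_halves, norm_neg,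
    Real.norm_of_nonneg (Real.sqrt_nonneg 2)]
  ring
end

section
/- Let n, m be positive natural numbers, let u ∈ ℂⁿ and v ∈ ℂᵐ be unit vectors, and define ψ : Fin n × Fin m → ℂ by ψ(i,j) = u(i) * v(j). Then for all self-adjoint matrices A, A' ∈ M_n(ℂ) and B, B' ∈ M_m(ℂ), each of operator (spectral) norm at most 1, one has |⟨ψ, (A ⊗ₖ (B - B')) ψ⟩| + |⟨ψ, (A' ⊗ₖ (B + B')) ψ⟩| ≤ 2, where ⊗ₖ denotes the Kronecker product of matrices and ⟨·,·⟩ is the standard inner product on ℂ^(Fin n × Fin m). -/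
open scoped Matrix.Norms.L2Operator Kronecker
open Matrix

/-- The expectation of a matrix in a product vector state factors over Kronecker products. -/
theorem star_dotProduct_kronecker_mulVec_mul {ι κ : Type*} [Fintype ι] [Fintype κ]
    (A : Matrix ι ι ℂ) (B : Matrix κ κ ℂ) (u : ι → ℂ) (v : κ → ℂ) :
    star (fun p : ι × κ => u p.1 * v p.2) ⬝ᵥ ((A ⊗ₖ B) *ᵥ fun p => u p.1 * v p.2) =
      (star u ⬝ᵥ (A *ᵥ u)) * (star v ⬝ᵥ (B *ᵥ v)) := by
  have h : ((A ⊗ₖ B) *ᵥ fun p : ι × κ => u p.1 * v p.2) =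
      fun p => (A *ᵥ u) p.1 * (B *ᵥ v) p.2 := by
    ext p
    simp only [mulVec, dotProduct, kroneckerMap_apply, Fintype.sum_mul_sum,
      Fintype.sum_prod_type]
    refine Finset.sum_congr rfl fun i _ => Finset.sum_congr rfl fun j _ => by ring
  rw [h]
  simp only [dotProduct, Pi.star_apply, star_mul', Fintype.sum_mul_sum, Fintype.sum_prod_type]
  refine Finset.sum_congr rfl fun i _ => Finset.sum_congr rfl fun j _ => by ring

/-- The expectation of a matrix in a unit vector state is bounded by its operator norm. -/
theorem norm_star_dotProduct_mulVec_le_l2_opNorm {ι : Type*} [Fintype ι] [DecidableEq ι]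
    (A : Matrix ι ι ℂ) {u : ι → ℂ} (hu : ∑ i, ‖u i‖ ^ 2 = 1) :
    ‖star u ⬝ᵥ (A *ᵥ u)‖ ≤ ‖A‖ := by
  have hn : ‖WithLp.toLp 2 u‖ = 1 := by
    rw [EuclideanSpace.norm_eq]
    simp [hu]
  have h₁ := A.l2_opNorm_mulVec (WithLp.toLp 2 u)
  have h₂ := norm_inner_le_norm (𝕜 := ℂ) (WithLp.toLp 2 u) (WithLp.toLp 2 (A *ᵥ u))
  rw [EuclideanSpace.inner_toLp_toLp, dotProduct_comm, hn, one_mul] at h₂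
  rw [hn, mul_one] at h₁
  exact h₂.trans h₁

/-- The expectation of a Hermitian matrix is real. -/
theorem Matrix.IsHermitian.ofReal_re_star_dotProduct_mulVec {ι : Type*} [Fintype ι]
    {A : Matrix ι ι ℂ} (hA : A.IsHermitian) (u : ι → ℂ) :
    (((star u ⬝ᵥ (A *ᵥ u)).re : ℝ) : ℂ) = star u ⬝ᵥ (A *ᵥ u) :=
  Complex.ext rfl (hA.im_star_dotProduct_mulVec_self u).symm

/-- The scalar inequality behind the Bell bound. -/
theorem abs_sub_add_abs_add_le_two {b b' : ℝ} (hb : |b| ≤ 1) (hb' : |b'| ≤ 1) :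
    |b - b'| + |b + b'| ≤ 2 := by
  grind

/-- The vector state of a product vector `ψ = u ⊗ v` on
`M_n(ℂ) ⊗ M_m(ℂ)` (realized via the Kronecker product) is a product state, and
hence satisfies the Bell bound `2`. -/
theorem product_vector_state_satisfies_bell_inequalities
    (n m : ℕ) (hn : 0 < n) (hm : 0 < m)
    (u : Fin n → ℂ) (hu : (∑ i, ‖u i‖ ^ 2) = 1)
    (v : Fin m → ℂ) (hv : (∑ j, ‖v j‖ ^ 2) = 1)
    (ψ : Fin n × Fin m → ℂ) (hψ : ∀ p : Fin n × Fin m, ψ p = u p.1 * v p.2)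
    (A A' : Matrix (Fin n) (Fin n) ℂ) (B B' : Matrix (Fin m) (Fin m) ℂ)
    (hA : A.IsHermitian) (hA' : A'.IsHermitian)
    (hB : B.IsHermitian) (hB' : B'.IsHermitian)
    (hAn : ‖A‖ ≤ 1) (hA'n : ‖A'‖ ≤ 1) (hBn : ‖B‖ ≤ 1) (hB'n : ‖B'‖ ≤ 1) :
    ‖star ψ ⬝ᵥ ((A ⊗ₖ (B - B')).mulVec ψ)‖ +
        ‖star ψ ⬝ᵥ ((A' ⊗ₖ (B + B')).mulVec ψ)‖ ≤ 2 := by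
  obtain rfl : ψ = fun p => u p.1 * v p.2 := funext hψ
  have ha := (norm_star_dotProduct_mulVec_le_l2_opNorm A hu).trans hAn
  have ha' := (norm_star_dotProduct_mulVec_le_l2_opNorm A' hu).trans hA'n
  have hb := (norm_star_dotProduct_mulVec_le_l2_opNorm B hv).trans hBn
  have hb' := (norm_star_dotProduct_mulVec_le_l2_opNorm B' hv).trans hB'n
  rw [star_dotProduct_kronecker_mulVec_mul, star_dotProduct_kronecker_mulVec_mul,
    sub_mulVec, add_mulVec, dotProduct_sub, dotProduct_add, norm_mul, norm_mul]
  refine (add_le_add (mul_le_of_le_one_left (norm_nonneg _) ha)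
    (mul_le_of_le_one_left (norm_nonneg _) ha')).trans ?_
  rw [← hB.ofReal_re_star_dotProduct_mulVec v, Complex.norm_real, Real.norm_eq_abs] at hb
  rw [← hB'.ofReal_re_star_dotProduct_mulVec v, Complex.norm_real, Real.norm_eq_abs] at hb'
  rw [← hB.ofReal_re_star_dotProduct_mulVec v, ← hB'.ofReal_re_star_dotProduct_mulVec v,
    ← Complex.ofReal_sub, ← Complex.ofReal_add, Complex.norm_real, Complex.norm_real]
  exact abs_sub_add_abs_add_le_two hb hb'
end

section
/- Let n, m be positive natural numbers and let ρ ∈ M_{nm}(ℂ) (indexed by Fin n × Fin m) be a separable density matrix, i.e. ρ = ∑_{k ∈ Finset} t_k • (ρ_k ⊗ₖ σ_k) where each t_k ≥ 0 with ∑ t_k = 1, each ρ_k ∈ M_n(ℂ) is positive semidefinite with trace 1, and each σ_k ∈ M_m(ℂ) is positive semidefinite with trace 1, and ⊗ₖ denotes the Kronecker product. Then for all self-adjoint matrices A, A' ∈ M_n(ℂ) and B, B' ∈ M_m(ℂ), each of operator (spectral) norm at most 1, one has |trace(ρ * (A ⊗ₖ (B - B')))| + |trace(ρ * (A' ⊗ₖ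 (B + B')))| ≤ 2. -/
open scoped Matrix.Norms.L2Operator Kronecker ComplexOrder
open Matrix

open scoped MatrixOrder in
/-- A contraction that is Hermitian lies below the identity in the Loewner order. -/
theorem Matrix.IsHermitian.posSemidef_one_sub_of_norm_le_one {d : Type*} [Fintype d]
    [DecidableEq d] {A : Matrix d d ℂ} (hA : A.IsHermitian) (hAn : ‖A‖ ≤ 1) :
    (1 - A).PosSemidef := by
  rw [← Matrix.le_iff]
  have hA_sa : IsSelfAdjoint A := hA
  calc A ≤ algebraMap ℝ (Matrix d d ℂ) ‖A‖ := hA_sa.le_algebraMap_norm_self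
    _ ≤ algebraMap ℝ (Matrix d d ℂ) 1 := algebraMap_mono _ hAn
    _ = 1 := map_one _

/-- The trace of a product of two positive semidefinite matrices is nonnegative. -/
theorem Matrix.PosSemidef.trace_mul_nonneg {d : Type*} [Fintype d]
    {P Q : Matrix d d ℂ} (hP : P.PosSemidef) (hQ : Q.PosSemidef) : 0 ≤ (P * Q).trace := by
  classical
  obtain ⟨C, rfl⟩ : ∃ C : Matrix d d ℂ, P = Cᴴ * C := by
    open scoped MatrixOrder in
    exact CStarAlgebra.nonneg_iff_eq_star_mul_self.mp (Matrix.nonneg_iff_posSemidef.mpr hP)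
  rw [Matrix.mul_assoc, Matrix.trace_mul_comm]
  exact (hQ.mul_mul_conjTranspose_same C).trace_nonneg

/-- The expectation of a Hermitian contraction in a density matrix is a real number in
`[-1, 1]`. -/
theorem Matrix.PosSemidef.exists_trace_mul_eq_ofReal {d : Type*} [Fintype d] [DecidableEq d]
    {P A : Matrix d d ℂ} (hP : P.PosSemidef) (hPtr : P.trace = 1) (hA : A.IsHermitian)
    (hAn : ‖A‖ ≤ 1) : ∃ a : ℝ, (P * A).trace = a ∧ |a| ≤ 1 := by
  have hsub := hP.trace_mul_nonneg (hA.posSemidef_one_sub_of_norm_le_one hAn)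
  have hadd := hP.trace_mul_nonneg
    (hA.neg.posSemidef_one_sub_of_norm_le_one (by rwa [norm_neg]))
  rw [mul_sub, mul_one, Matrix.trace_sub, hPtr, Complex.nonneg_iff] at hsub
  rw [sub_neg_eq_add, mul_add, mul_one, Matrix.trace_add, hPtr, Complex.nonneg_iff] at hadd
  simp only [Complex.sub_re, Complex.one_re, Complex.add_re, Complex.add_im,
    Complex.one_im, zero_add] at hsub hadd
  refine ⟨(P * A).trace.re, Complex.ext (by simp) (by simpa using hadd.2.symm), ?_⟩
  rw [abs_le]
  constructor <;> linarith

/-- The scalar Bell inequality. -/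
theorem abs_mul_sub_add_abs_mul_add_le_two_s10 {a a' b b' : ℝ} (ha : |a| ≤ 1) (ha' : |a'| ≤ 1)
    (hb : |b| ≤ 1) (hb' : |b'| ≤ 1) : |a * (b - b')| + |a' * (b + b')| ≤ 2 := by
  calc |a * (b - b')| + |a' * (b + b')| ≤ |b - b'| + |b + b'| := by
        rw [abs_mul, abs_mul]
        exact add_le_add (mul_le_of_le_one_left (abs_nonneg _) ha)
          (mul_le_of_le_one_left (abs_nonneg _) ha')
    _ ≤ 2 := by
        rw [abs_le] at hb hb'
        rcases abs_cases (b - b') with h | h <;> rcases abs_cases (b + b') with h' | h' <;>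
          linarith

/-- The trace against a linear combination of product matrices splits accordingly. -/
theorem Matrix.trace_sum_smul_kronecker_mul {ι p q : Type*} [Fintype p] [Fintype q]
    (s : Finset ι) (t : ι → ℂ) (P : ι → Matrix p p ℂ) (Q : ι → Matrix q q ℂ)
    (X : Matrix p p ℂ) (Y : Matrix q q ℂ) :
    ((∑ k ∈ s, t k • (P k ⊗ₖ Q k)) * (X ⊗ₖ Y)).trace =
      ∑ k ∈ s, t k * ((P k * X).trace * (Q k * Y).trace) := by
  simp only [Finset.sum_mul, Matrix.trace_sum, Matrix.smul_mul, Matrix.trace_smul,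
    ← Matrix.mul_kronecker_mul, Matrix.trace_kronecker, smul_eq_mul]

/-- Every separable density matrix (a convex combination of Kronecker products
of density matrices) satisfies the Bell inequalities. -/
theorem separable_density_matrix_satisfies_bell_inequalities
    (n m : ℕ) (hn : 0 < n) (hm : 0 < m)
    (ρ : Matrix (Fin n × Fin m) (Fin n × Fin m) ℂ)
    (ι : Type*) (s : Finset ι) (t : ι → ℝ)
    (ρs : ι → Matrix (Fin n) (Fin n) ℂ) (σs : ι → Matrix (Fin m) (Fin m) ℂ)
    (ht : ∀ k ∈ s, 0 ≤ t k) (hts : ∑ k ∈ s, t k = 1)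
    (hρs : ∀ k ∈ s, (ρs k).PosSemidef) (hρstr : ∀ k ∈ s, (ρs k).trace = 1)
    (hσs : ∀ k ∈ s, (σs k).PosSemidef) (hσstr : ∀ k ∈ s, (σs k).trace = 1)
    (hρ : ρ = ∑ k ∈ s, (t k : ℂ) • (ρs k ⊗ₖ σs k))
    (A A' : Matrix (Fin n) (Fin n) ℂ) (B B' : Matrix (Fin m) (Fin m) ℂ)
    (hA : A.IsHermitian) (hA' : A'.IsHermitian)
    (hB : B.IsHermitian) (hB' : B'.IsHermitian)
    (hAn : ‖A‖ ≤ 1) (hA'n : ‖A'‖ ≤ 1) (hBn : ‖B‖ ≤ 1) (hB'n : ‖B'‖ ≤ 1) :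
    ‖(ρ * (A ⊗ₖ (B - B'))).trace‖ +
        ‖(ρ * (A' ⊗ₖ (B + B'))).trace‖ ≤ 2 := by
  have hnorm (X : Matrix (Fin n) (Fin n) ℂ) (Y : Matrix (Fin m) (Fin m) ℂ) :
      ‖(ρ * (X ⊗ₖ Y)).trace‖ ≤
        ∑ k ∈ s, t k * ‖(ρs k * X).trace * (σs k * Y).trace‖ := by
    rw [hρ, Matrix.trace_sum_smul_kronecker_mul]
    refine (norm_sum_le _ _).trans (Finset.sum_le_sum fun k hk => ?_)
    rw [norm_mul, Complex.norm_of_nonneg (ht k hk)]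
  calc _ ≤ ∑ k ∈ s, t k * (‖(ρs k * A).trace * (σs k * (B - B')).trace‖ +
          ‖(ρs k * A').trace * (σs k * (B + B')).trace‖) := by
        simp only [mul_add (t _), Finset.sum_add_distrib]
        exact add_le_add (hnorm A (B - B')) (hnorm A' (B + B'))
    _ ≤ ∑ k ∈ s, t k * 2 := by
        refine Finset.sum_le_sum fun k hk => mul_le_mul_of_nonneg_left ?_ (ht k hk)
        obtain ⟨a, hak, ha⟩ := (hρs k hk).exists_trace_mul_eq_ofReal (hρstr k hk) hA hAn
        obtain ⟨a', hak', ha'⟩ := (hρs k hk).exists_trace_mul_eq_ofReal (hρstr k hk) hA' hA'n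
        obtain ⟨b, hbk, hb⟩ := (hσs k hk).exists_trace_mul_eq_ofReal (hσstr k hk) hB hBn
        obtain ⟨b', hbk', hb'⟩ := (hσs k hk).exists_trace_mul_eq_ofReal (hσstr k hk) hB' hB'n
        rw [mul_sub, mul_add, Matrix.trace_sub, Matrix.trace_add, hak, hak', hbk, hbk']
        have hbell := abs_mul_sub_add_abs_mul_add_le_two_s10 ha ha' hb hb'
        rw [← Real.norm_eq_abs, ← Real.norm_eq_abs, ← Complex.norm_real,
          ← Complex.norm_real] at hbell
        exact_mod_cast hbell
    _ = 2 := by rw [← Finset.sum_mul, hts, one_mul]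
end
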